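/- arXiv:2012.01618 — 5 statements merged into one kernel-verified Lean document; each statement's English description precedes it below -/
import Mathlib

section
/- For every t ∈ {1,…,T}, the surrogate Q̃_{A,t} majorizes the exact partial objective: for all A ∈ ℝ^{m×r}, Q̃_{A,t}(A) ≥ Q_{A,t}(A), where Q_{A,t}(A) is the same expression as Q̃_{A,t}(A) but with the first term (1/2)‖X_t^{(k)} − A(B_t^{(k)})ᵀ‖_F² replaced by (1/2)‖P_{Ω_t}(X_t − A(B_t^{(k)})ᵀ)‖_F²; moreover equality Q̃_{A,t}(A_t^{(k)}) = Q_{A,t}(A_t^{(k)}) holds at the current iterate A_t^{(k)}. -/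
/-!
The filled-in matrix agrees with the data on `Ω` and with the current fit off `Ω`, so its squared
residual is the observed residual plus `‖P_{Ω^⊥}(A_t^{(k)} Bᵀ - A Bᵀ)‖_F²` (`frobSq_fill_sub`).
All other terms of the two objectives coincide; the extra term is nonnegative and vanishes
at `A = A_t^{(k)}`.
-/

open Matrix BigOperators Finset Filter Topology

/-- Squared Frobenius norm of a real matrix. -/
noncomputable def frobSq {a b : ℕ} (M : Matrix (Fin a) (Fin b) ℝ) : ℝ :=
  ∑ i, ∑ j, (M i j) ^ 2

/-- Projection onto the observed entries `Ω`. -/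
noncomputable def proj {a b : ℕ} (Ω : Finset (Fin a × Fin b))
    (M : Matrix (Fin a) (Fin b) ℝ) : Matrix (Fin a) (Fin b) ℝ :=
  fun i j => if (i, j) ∈ Ω then M i j else 0

/-- Projection onto the complement of `Ω`. -/
noncomputable def projPerp {a b : ℕ} (Ω : Finset (Fin a × Fin b))
    (M : Matrix (Fin a) (Fin b) ℝ) : Matrix (Fin a) (Fin b) ℝ :=
  M - proj Ω M
/-- The surrogate `Q̃_{A,t}(A)`.  Here `Akt, Bkt` are the current factors at time `t`
(used to form the filled-in matrix `X_t^{(k)} = P_{Ω_t}(X_t) + P_{Ω_t^⊥}(A_t^{(k)}(B_t^{(k)})ᵀ)`),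
and `prevM, nextM` are the neighbouring imputations
`A_{t−1}^{(k+1)}(B_{t−1}^{(k)})ᵀ` and `A_{t+1}^{(k)}(B_{t+1}^{(k)})ᵀ`. -/
noncomputable def QtilA {m n r : ℕ} (T : ℕ) (l1 l2 l3 : ℝ)
    (Ωt : Finset (Fin m × Fin n)) (Xt Yt : Matrix (Fin m) (Fin n) ℝ)
    (Akt : Matrix (Fin m) (Fin r) ℝ) (Bkt : Matrix (Fin n) (Fin r) ℝ)
    (prevM nextM : Matrix (Fin m) (Fin n) ℝ) (t : ℕ)
    (A : Matrix (Fin m) (Fin r) ℝ) : ℝ :=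
  (1 / 2) * frobSq (proj Ωt Xt + projPerp Ωt (Akt * Bktᵀ) - A * Bktᵀ)
    + (l1 / 2) * frobSq A
    + (l3 / 2) * frobSq (Yt - A * Bktᵀ)
    + (l2 / 2) * (if 1 < t then frobSq (A * Bktᵀ - prevM) else 0)
    + (l2 / 2) * (if t < T then frobSq (nextM - A * Bktᵀ) else 0)

/-- The exact partial objective `Q_{A,t}(A)`: same as `Q̃_{A,t}(A)` except that the first
term is `(1/2)‖P_{Ω_t}(X_t − A(B_t^{(k)})ᵀ)‖_F²`. -/
noncomputable def QexA {m n r : ℕ} (T : ℕ) (l1 l2 l3 : ℝ)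
    (Ωt : Finset (Fin m × Fin n)) (Xt Yt : Matrix (Fin m) (Fin n) ℝ)
    (Bkt : Matrix (Fin n) (Fin r) ℝ)
    (prevM nextM : Matrix (Fin m) (Fin n) ℝ) (t : ℕ)
    (A : Matrix (Fin m) (Fin r) ℝ) : ℝ :=
  (1 / 2) * frobSq (proj Ωt (Xt - A * Bktᵀ))
    + (l1 / 2) * frobSq A
    + (l3 / 2) * frobSq (Yt - A * Bktᵀ)
    + (l2 / 2) * (if 1 < t then frobSq (A * Bktᵀ - prevM) else 0)
    + (l2 / 2) * (if t < T then frobSq (nextM - A * Bktᵀ) else 0)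

/-- The squared residual of the filled-in matrix splits into its parts on `Ω` and off `Ω`:
on `Ω` the fill-in is the data `X`, off `Ω` it is the previous fit `W`. -/
lemma frobSq_fill_sub {a b : ℕ} (Ω : Finset (Fin a × Fin b))
    (X W Z : Matrix (Fin a) (Fin b) ℝ) :
    frobSq (proj Ω X + projPerp Ω W - Z)
      = frobSq (proj Ω (X - Z)) + frobSq (projPerp Ω (W - Z)) := by
  simp only [frobSq, ← Finset.sum_add_distrib]
  refine Finset.sum_congr rfl fun i _ => Finset.sum_congr rfl fun j _ => ?_
  by_cases h : (i, j) ∈ Ω <;> simp [proj, projPerp, h]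

lemma frobSq_nonneg {a b : ℕ} (M : Matrix (Fin a) (Fin b) ℝ) : 0 ≤ frobSq M :=
  Finset.sum_nonneg fun _ _ => Finset.sum_nonneg fun _ _ => sq_nonneg _

/-- the surrogate `Q̃_{A,t}` majorizes the exact partial objective `Q_{A,t}`,
with equality at the current iterate `A_t^{(k)}`. -/
theorem stmt1 (m n r T : ℕ) (hm : 0 < m) (hn : 0 < n) (hr : 0 < r) (hT : 0 < T)
    (l1 l2 l3 : ℝ) (hl1 : 0 ≤ l1) (hl2 : 0 ≤ l2) (hl3 : 0 ≤ l3)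
    (Ωs : ℕ → Finset (Fin m × Fin n))
    (Xs Ys : ℕ → Matrix (Fin m) (Fin n) ℝ)
    (Ak Akp : ℕ → Matrix (Fin m) (Fin r) ℝ)
    (Bk : ℕ → Matrix (Fin n) (Fin r) ℝ)
    (t : ℕ) (ht1 : 1 ≤ t) (htT : t ≤ T) :
    (∀ A : Matrix (Fin m) (Fin r) ℝ,
      QexA T l1 l2 l3 (Ωs t) (Xs t) (Ys t) (Bk t)
          (Akp (t - 1) * (Bk (t - 1))ᵀ) (Ak (t + 1) * (Bk (t + 1))ᵀ) t A
        ≤ QtilA T l1 l2 l3 (Ωs t) (Xs t) (Ys t) (Ak t) (Bk t)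
          (Akp (t - 1) * (Bk (t - 1))ᵀ) (Ak (t + 1) * (Bk (t + 1))ᵀ) t A) ∧
    QtilA T l1 l2 l3 (Ωs t) (Xs t) (Ys t) (Ak t) (Bk t)
        (Akp (t - 1) * (Bk (t - 1))ᵀ) (Ak (t + 1) * (Bk (t + 1))ᵀ) t (Ak t)
      = QexA T l1 l2 l3 (Ωs t) (Xs t) (Ys t) (Bk t)
        (Akp (t - 1) * (Bk (t - 1))ᵀ) (Ak (t + 1) * (Bk (t + 1))ᵀ) t (Ak t) := by
  refine ⟨fun A => ?_, ?_⟩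
  · have h := frobSq_nonneg (projPerp (Ωs t) (Ak t * (Bk t)ᵀ - A * (Bk t)ᵀ))
    unfold QexA QtilA
    rw [frobSq_fill_sub]
    linarith
  · have h : frobSq (projPerp (Ωs t) (Ak t * (Bk t)ᵀ - Ak t * (Bk t)ᵀ)) = 0 := by
      simp [frobSq, projPerp, proj]
    unfold QexA QtilA
    rw [frobSq_fill_sub, h, add_zero]
end

section
/- One-step descent: fix t ∈ {1,…,T}, current factors A_s ∈ ℝ^{m×r}, B_s ∈ ℝ^{n×r} (s = 1,…,T), and let A' ∈ ℝ^{m×r} be any global minimizer of the surrogate Q̃_{A,t} formed at these current factors (i.e. with A_s^{(k+1)} = A_s for s < t and A_s^{(k)} = A_s for s ≥ t, B_s^{(k)} = B_s for all s). Then replacing A_t by A' does not increase the objective: F(A_1,…,A_{t−1},A',A_{t+1},…,A_T, B_{1:T}) ≤ F(A_{1:T}, B_{1:T}). -/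
/-!
The surrogate majorizes, up to a constant, the part of the objective that depends on `A_t`, with
equality at the current factor. Filling the unobserved entries of `X_t` with those of `A_t B_tᵀ`
adds to the data-fit term the unobserved part of `‖A_t B_tᵀ - A B_tᵀ‖²`, which is nonnegative and
vanishes at `A = A_t` (`frobSq_proj_sub_le`). All other terms of the surrogate occur verbatim in
the objective: the only smoothness summands involving `A_t` are those with index `t` and `t + 1`
(`sum_sub_sum_smooth`). Hence the change in the objective is at most the change in the surrogate,
which is nonpositive at a minimizer.
-/

open Matrix BigOperators Finset Filter Topology

/-- The VISTA objective `F(A_{1:T}, B_{1:T})`; time indices run over `t = 1,…,T`. -/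
noncomputable def objF {m n r : ℕ} (T : ℕ) (l1 l2 l3 : ℝ)
    (Ωs : ℕ → Finset (Fin m × Fin n))
    (Xs Ys : ℕ → Matrix (Fin m) (Fin n) ℝ)
    (A : ℕ → Matrix (Fin m) (Fin r) ℝ)
    (B : ℕ → Matrix (Fin n) (Fin r) ℝ) : ℝ :=
  (1 / 2) * ∑ t ∈ Finset.Icc 1 T, frobSq (proj (Ωs t) (Xs t - A t * (B t)ᵀ))
    + (l1 / 2) * ∑ t ∈ Finset.Icc 1 T, (frobSq (A t) + frobSq (B t))
    + (l2 / 2) * ∑ t ∈ Finset.Icc 2 T,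
        frobSq (A t * (B t)ᵀ - A (t - 1) * (B (t - 1))ᵀ)
    + (l3 / 2) * ∑ t ∈ Finset.Icc 1 T, frobSq (Ys t - A t * (B t)ᵀ)
/-- Majorization of the data-fit term: passing from the current fit `M` to `N`, the observed
residual grows by no more than the residual against the filled-in matrix, because the latter has
zero unobserved part at `M`. -/
lemma frobSq_proj_sub_le {a b : ℕ} (Ω : Finset (Fin a × Fin b))
    (X M N : Matrix (Fin a) (Fin b) ℝ) :
    frobSq (proj Ω (X - N)) - frobSq (proj Ω (X - M))
      ≤ frobSq (proj Ω X + projPerp Ω M - N) - frobSq (proj Ω X + projPerp Ω M - M) := by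
  simp only [frobSq, ← Finset.sum_sub_distrib]
  refine Finset.sum_le_sum fun i _ => Finset.sum_le_sum fun j _ => ?_
  by_cases h : (i, j) ∈ Ω
  · simp [proj, projPerp, h]
  · simp [proj, projPerp, h, sq_nonneg]

lemma sum_sub_sum_single {S : Finset ℕ} {t : ℕ} (ht : t ∈ S) (f g : ℕ → ℝ)
    (h : ∀ s, s ≠ t → f s = g s) :
    ∑ s ∈ S, f s - ∑ s ∈ S, g s = f t - g t := by
  rw [← Finset.sum_sub_distrib]
  exact Finset.sum_eq_single_of_mem t ht fun s _ hs => sub_eq_zero.2 (h s hs)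

/-- Two sums over `2, …, T` whose summands agree away from `t` and `t + 1` differ by the
contributions of those two indices, each present only when it lies in the range. -/
lemma sum_sub_sum_smooth {T t : ℕ} (ht1 : 1 ≤ t) (htT : t ≤ T) (f g : ℕ → ℝ)
    (h : ∀ s, s ≠ t → s ≠ t + 1 → f s = g s) :
    ∑ s ∈ Finset.Icc 2 T, f s - ∑ s ∈ Finset.Icc 2 T, g s
      = (if 1 < t then f t - g t else 0)
        + (if t < T then f (t + 1) - g (t + 1) else 0) := by
  have hd : ∀ s, f s - g s = (if s = t then f t - g t else 0)
      + (if s = t + 1 then f (t + 1) - g (t + 1) else 0) := by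
    intro s
    by_cases h1 : s = t
    · subst h1; simp
    · by_cases h2 : s = t + 1
      · subst h2; simp
      · simp [h1, h2, h s h1 h2]
  rw [← Finset.sum_sub_distrib, Finset.sum_congr rfl fun s _ => hd s, Finset.sum_add_distrib,
    Finset.sum_ite_eq', Finset.sum_ite_eq']
  have e1 : t ∈ Finset.Icc 2 T ↔ 1 < t := by rw [Finset.mem_Icc]; omega
  have e2 : t + 1 ∈ Finset.Icc 2 T ↔ t < T := by rw [Finset.mem_Icc]; omega
  simp only [e1, e2]

/-- one-step descent.  If `A'` is a global minimizer of the surrogate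
`Q̃_{A,t}` formed at the current factors, then replacing `A_t` by `A'` does not increase
the VISTA objective. -/
theorem stmt4 (m n r T : ℕ) (hm : 0 < m) (hn : 0 < n) (hr : 0 < r) (hT : 0 < T)
    (l1 l2 l3 : ℝ) (hl1 : 0 ≤ l1) (hl2 : 0 ≤ l2) (hl3 : 0 ≤ l3)
    (Ωs : ℕ → Finset (Fin m × Fin n))
    (Xs Ys : ℕ → Matrix (Fin m) (Fin n) ℝ)
    (A : ℕ → Matrix (Fin m) (Fin r) ℝ)
    (B : ℕ → Matrix (Fin n) (Fin r) ℝ)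
    (t : ℕ) (ht1 : 1 ≤ t) (htT : t ≤ T)
    (A' : Matrix (Fin m) (Fin r) ℝ)
    (hmin : ∀ A0 : Matrix (Fin m) (Fin r) ℝ,
      QtilA T l1 l2 l3 (Ωs t) (Xs t) (Ys t) (A t) (B t)
          (A (t - 1) * (B (t - 1))ᵀ) (A (t + 1) * (B (t + 1))ᵀ) t A'
        ≤ QtilA T l1 l2 l3 (Ωs t) (Xs t) (Ys t) (A t) (B t)
          (A (t - 1) * (B (t - 1))ᵀ) (A (t + 1) * (B (t + 1))ᵀ) t A0) :
    objF T l1 l2 l3 Ωs Xs Ys (Function.update A t A') B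
      ≤ objF T l1 l2 l3 Ωs Xs Ys A B := by
  have hQ := hmin (A t)
  have hfit := frobSq_proj_sub_le (Ωs t) (Xs t) (A t * (B t)ᵀ) (A' * (B t)ᵀ)
  have s1 := sum_sub_sum_single (Finset.mem_Icc.2 ⟨ht1, htT⟩)
    (fun s => frobSq (proj (Ωs s) (Xs s - Function.update A t A' s * (B s)ᵀ)))
    (fun s => frobSq (proj (Ωs s) (Xs s - A s * (B s)ᵀ)))
    (fun s hs => by simp [hs])
  have s2 := sum_sub_sum_single (Finset.mem_Icc.2 ⟨ht1, htT⟩)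
    (fun s => frobSq (Function.update A t A' s) + frobSq (B s))
    (fun s => frobSq (A s) + frobSq (B s))
    (fun s hs => by simp [hs])
  have s3 := sum_sub_sum_single (Finset.mem_Icc.2 ⟨ht1, htT⟩)
    (fun s => frobSq (Ys s - Function.update A t A' s * (B s)ᵀ))
    (fun s => frobSq (Ys s - A s * (B s)ᵀ))
    (fun s hs => by simp [hs])
  -- At `s = 0` truncated subtraction gives `s - 1 = 0`, which differs from `t` since `t ≥ 1`.
  have s4 := sum_sub_sum_smooth ht1 htT
    (fun s => frobSq (Function.update A t A' s * (B s)ᵀ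
      - Function.update A t A' (s - 1) * (B (s - 1))ᵀ))
    (fun s => frobSq (A s * (B s)ᵀ - A (s - 1) * (B (s - 1))ᵀ))
    (fun s hs hs' => by
      have : s - 1 ≠ t := by omega
      simp [hs, this])
  have ht : t - 1 ≠ t := by omega
  simp only [Function.update_self, Function.update_of_ne ht, Nat.add_sub_cancel,
    Function.update_of_ne (Nat.succ_ne_self t)] at s1 s2 s3 s4
  unfold QtilA at hQ
  unfold objF
  rw [sub_eq_iff_eq_add] at s1 s2 s3 s4
  rw [s1, s2, s3, s4]
  split_ifs at hQ ⊢ <;> linarith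
end

section
/- Theorem 1 (descent property of VISTA): along the VISTA iterates, the objective value is non-increasing: F(A_{1:T}^{(k)}, B_{1:T}^{(k)}) ≥ F(A_{1:T}^{(k+1)}, B_{1:T}^{(k)}) ≥ F(A_{1:T}^{(k+1)}, B_{1:T}^{(k+1)}) for every k ≥ 1; consequently Δ_k ≥ 0 for all k ≥ 1. -/
/-!
The proof combines majorization with a Gauss–Seidel sweep over time. Filling the unobserved
entries with the current product `M` can only increase the data-fit term, with equality at `M`
itself (`frobSq_proj_le`, `frobSq_proj_self`). Hence the surrogate inequality at time `t` gives
the same inequality for the true local cost plus the coupling terms to the neighbours `t - 1`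
(already updated) and `t + 1` (not yet updated). Summing over `t`, the mixed couplings between
the old product at `t + 1` and the new product at `t` occur once on each side and cancel
(`sweep_descent`), leaving exactly the inequality between the two objective values.
-/

open Matrix BigOperators Finset Filter Topology

/-- The surrogate `Q̃_{B,t}(B)`.  Here `At` is the already-updated `A_t^{(k+1)}`, `Bkt` the
current `B_t^{(k)}` (used to form `X_t^{(k+1/2)} = P_{Ω_t}(X_t) + P_{Ω_t^⊥}(A_t^{(k+1)}(B_t^{(k)})ᵀ)`),
and `prevM, nextM` are `A_{t−1}^{(k+1)}(B_{t−1}^{(k+1)})ᵀ` and `A_{t+1}^{(k+1)}(B_{t+1}^{(k)})ᵀ`. -/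
noncomputable def QtilB {m n r : ℕ} (T : ℕ) (l1 l2 l3 : ℝ)
    (Ωt : Finset (Fin m × Fin n)) (Xt Yt : Matrix (Fin m) (Fin n) ℝ)
    (At : Matrix (Fin m) (Fin r) ℝ) (Bkt : Matrix (Fin n) (Fin r) ℝ)
    (prevM nextM : Matrix (Fin m) (Fin n) ℝ) (t : ℕ)
    (B : Matrix (Fin n) (Fin r) ℝ) : ℝ :=
  (1 / 2) * frobSq (proj Ωt Xt + projPerp Ωt (At * Bktᵀ) - At * Bᵀ)
    + (l1 / 2) * frobSq B
    + (l3 / 2) * frobSq (Yt - At * Bᵀ)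
    + (l2 / 2) * (if 1 < t then frobSq (At * Bᵀ - prevM) else 0)
    + (l2 / 2) * (if t < T then frobSq (nextM - At * Bᵀ) else 0)

theorem frobSq_proj_le {a b : ℕ} (Ω : Finset (Fin a × Fin b))
    (X M Z : Matrix (Fin a) (Fin b) ℝ) :
    frobSq (proj Ω (X - Z)) ≤ frobSq (proj Ω X + projPerp Ω M - Z) := by
  unfold frobSq
  refine Finset.sum_le_sum fun i _ => Finset.sum_le_sum fun j _ => ?_
  by_cases h : (i, j) ∈ Ω
  · simp [proj, projPerp, h]
  · simp [proj, projPerp, h, sq_nonneg]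

theorem frobSq_proj_self {a b : ℕ} (Ω : Finset (Fin a × Fin b))
    (X M : Matrix (Fin a) (Fin b) ℝ) :
    frobSq (proj Ω X + projPerp Ω M - M) = frobSq (proj Ω (X - M)) := by
  unfold frobSq
  refine Finset.sum_congr rfl fun i _ => Finset.sum_congr rfl fun j _ => ?_
  by_cases h : (i, j) ∈ Ω
  · simp [proj, projPerp, h]
  · simp [proj, projPerp, h]

theorem sum_ite_one_lt (T : ℕ) (f : ℕ → ℝ) :
    ∑ t ∈ Finset.Icc 1 T, (if 1 < t then f t else 0) = ∑ t ∈ Finset.Icc 2 T, f t := by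
  rw [← Finset.sum_filter]
  refine Finset.sum_congr ?_ fun _ _ => rfl
  ext t
  simp only [Finset.mem_filter, Finset.mem_Icc]
  omega

theorem sum_ite_lt (T : ℕ) (f : ℕ → ℝ) :
    ∑ t ∈ Finset.Icc 1 T, (if t < T then f (t + 1) else 0) = ∑ t ∈ Finset.Icc 2 T, f t := by
  rw [← Finset.sum_filter]
  refine Finset.sum_nbij' (fun t => t + 1) (fun t => t - 1) ?_ ?_ ?_ ?_ ?_ <;>
    intro t ht <;> simp only [Finset.mem_filter, Finset.mem_Icc] at * <;> omega

/-- One forward sweep over time. Here `M` and `N` are the products before and after the sweep,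
and `v`, `u` the corresponding local costs; at time `t` the left neighbour is already updated
and the right one is not. The mixed couplings `frobSq (M (t + 1) - N t)` cancel in the sum. -/
theorem sweep_descent {m n : ℕ} (T : ℕ) (c : ℝ) (u v : ℕ → ℝ)
    (M N : ℕ → Matrix (Fin m) (Fin n) ℝ)
    (h : ∀ t ∈ Finset.Icc 1 T,
      u t + c * (if 1 < t then frobSq (N t - N (t - 1)) else 0)
          + c * (if t < T then frobSq (M (t + 1) - N t) else 0)
        ≤ v t + c * (if 1 < t then frobSq (M t - N (t - 1)) else 0)
          + c * (if t < T then frobSq (M (t + 1) - M t) else 0)) :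
    ∑ t ∈ Finset.Icc 1 T, u t + c * ∑ t ∈ Finset.Icc 2 T, frobSq (N t - N (t - 1))
      ≤ ∑ t ∈ Finset.Icc 1 T, v t + c * ∑ t ∈ Finset.Icc 2 T, frobSq (M t - M (t - 1)) := by
  have hs := Finset.sum_le_sum h
  simp only [Finset.sum_add_distrib, ← Finset.mul_sum] at hs
  have h1 := sum_ite_lt T fun s => frobSq (M s - N (s - 1))
  have h2 := sum_ite_lt T fun s => frobSq (M s - M (s - 1))
  simp only [Nat.add_sub_cancel] at h1 h2
  rw [sum_ite_one_lt T fun t => frobSq (N t - N (t - 1)),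
    sum_ite_one_lt T fun t => frobSq (M t - N (t - 1)), h1, h2] at hs
  linarith

/-- The part of the objective at time `t` that does not involve the neighbouring times. -/
noncomputable def localCost {m n r : ℕ} (l1 l3 : ℝ) (Ω : Finset (Fin m × Fin n))
    (X Y : Matrix (Fin m) (Fin n) ℝ) (A : Matrix (Fin m) (Fin r) ℝ)
    (B : Matrix (Fin n) (Fin r) ℝ) : ℝ :=
  (1 / 2) * frobSq (proj Ω (X - A * Bᵀ)) + (l1 / 2) * (frobSq A + frobSq B)
    + (l3 / 2) * frobSq (Y - A * Bᵀ)

theorem objF_eq {m n r : ℕ} (T : ℕ) (l1 l2 l3 : ℝ) (Ωs : ℕ → Finset (Fin m × Fin n))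
    (Xs Ys : ℕ → Matrix (Fin m) (Fin n) ℝ) (A : ℕ → Matrix (Fin m) (Fin r) ℝ)
    (B : ℕ → Matrix (Fin n) (Fin r) ℝ) :
    objF T l1 l2 l3 Ωs Xs Ys A B
      = ∑ t ∈ Finset.Icc 1 T, localCost l1 l3 (Ωs t) (Xs t) (Ys t) (A t) (B t)
        + (l2 / 2) * ∑ t ∈ Finset.Icc 2 T,
            frobSq (A t * (B t)ᵀ - A (t - 1) * (B (t - 1))ᵀ) := by
  simp only [objF, localCost, Finset.sum_add_distrib, ← Finset.mul_sum]
  ring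

/-- Theorem 1, descent property of VISTA: along the VISTA iterates the
objective is non-increasing:
`F(A^{(k)},B^{(k)}) ≥ F(A^{(k+1)},B^{(k)}) ≥ F(A^{(k+1)},B^{(k+1)})`, hence `Δ_k ≥ 0`. -/
theorem stmt5 (m n r T : ℕ) (hm : 0 < m) (hn : 0 < n) (hr : 0 < r) (hT : 0 < T)
    (l1 l2 l3 : ℝ) (hl1 : 0 ≤ l1) (hl2 : 0 ≤ l2) (hl3 : 0 ≤ l3)
    (Ωs : ℕ → Finset (Fin m × Fin n))
    (Xs Ys : ℕ → Matrix (Fin m) (Fin n) ℝ)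
    (AA : ℕ → ℕ → Matrix (Fin m) (Fin r) ℝ)
    (BB : ℕ → ℕ → Matrix (Fin n) (Fin r) ℝ)
    (hA : ∀ k, 1 ≤ k → ∀ t ∈ Finset.Icc 1 T, ∀ A : Matrix (Fin m) (Fin r) ℝ,
      QtilA T l1 l2 l3 (Ωs t) (Xs t) (Ys t) (AA k t) (BB k t)
          (AA (k + 1) (t - 1) * (BB k (t - 1))ᵀ) (AA k (t + 1) * (BB k (t + 1))ᵀ) t
          (AA (k + 1) t)
        ≤ QtilA T l1 l2 l3 (Ωs t) (Xs t) (Ys t) (AA k t) (BB k t)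
          (AA (k + 1) (t - 1) * (BB k (t - 1))ᵀ) (AA k (t + 1) * (BB k (t + 1))ᵀ) t A)
    (hB : ∀ k, 1 ≤ k → ∀ t ∈ Finset.Icc 1 T, ∀ B : Matrix (Fin n) (Fin r) ℝ,
      QtilB T l1 l2 l3 (Ωs t) (Xs t) (Ys t) (AA (k + 1) t) (BB k t)
          (AA (k + 1) (t - 1) * (BB (k + 1) (t - 1))ᵀ)
          (AA (k + 1) (t + 1) * (BB k (t + 1))ᵀ) t (BB (k + 1) t)
        ≤ QtilB T l1 l2 l3 (Ωs t) (Xs t) (Ys t) (AA (k + 1) t) (BB k t)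
          (AA (k + 1) (t - 1) * (BB (k + 1) (t - 1))ᵀ)
          (AA (k + 1) (t + 1) * (BB k (t + 1))ᵀ) t B)
    : ∀ k, 1 ≤ k →
      objF T l1 l2 l3 Ωs Xs Ys (AA (k + 1)) (BB k)
          ≤ objF T l1 l2 l3 Ωs Xs Ys (AA k) (BB k) ∧
      objF T l1 l2 l3 Ωs Xs Ys (AA (k + 1)) (BB (k + 1))
          ≤ objF T l1 l2 l3 Ωs Xs Ys (AA (k + 1)) (BB k) ∧
      0 ≤ objF T l1 l2 l3 Ωs Xs Ys (AA k) (BB k)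
          - objF T l1 l2 l3 Ωs Xs Ys (AA (k + 1)) (BB (k + 1)) := by
  intro k hk
  have h1 : objF T l1 l2 l3 Ωs Xs Ys (AA (k + 1)) (BB k)
      ≤ objF T l1 l2 l3 Ωs Xs Ys (AA k) (BB k) := by
    rw [objF_eq, objF_eq]
    refine sweep_descent T (l2 / 2) _ _ (fun t => AA k t * (BB k t)ᵀ)
      (fun t => AA (k + 1) t * (BB k t)ᵀ) fun t ht => ?_
    have h := hA k hk t ht (AA k t)
    have hp := frobSq_proj_le (Ωs t) (Xs t) (AA k t * (BB k t)ᵀ) (AA (k + 1) t * (BB k t)ᵀ)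
    simp only [QtilA, frobSq_proj_self] at h
    simp only [localCost]
    linarith
  have h2 : objF T l1 l2 l3 Ωs Xs Ys (AA (k + 1)) (BB (k + 1))
      ≤ objF T l1 l2 l3 Ωs Xs Ys (AA (k + 1)) (BB k) := by
    rw [objF_eq, objF_eq]
    refine sweep_descent T (l2 / 2) _ _ (fun t => AA (k + 1) t * (BB k t)ᵀ)
      (fun t => AA (k + 1) t * (BB (k + 1) t)ᵀ) fun t ht => ?_
    have h := hB k hk t ht (BB k t)
    have hp := frobSq_proj_le (Ωs t) (Xs t) (AA (k + 1) t * (BB k t)ᵀ)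
      (AA (k + 1) t * (BB (k + 1) t)ᵀ)
    simp only [QtilB, frobSq_proj_self] at h
    simp only [localCost]
    linarith
  exact ⟨h1, h2, by linarith⟩
end

section
/- Per-update descent bound for the B-step: along the VISTA iterates, for every k ≥ 1 and every t ∈ {1,…,T}, the decrease of the objective from updating B_t alone satisfies Δ^B_{k,t} := F(A_{1:T}^{(k+1)}, B_{1:t−1}^{(k+1)}, B_{t:T}^{(k)}) − F(A_{1:T}^{(k+1)}, B_{1:t}^{(k+1)}, B_{t+1:T}^{(k)}) ≥ ((1 + λ2(1{t>1} + 1{t<T}) + λ3)/2)·‖A_t^{(k+1)}(B_t^{(k)} − B_t^{(k+1)})ᵀ‖_F² + (λ1/2)·‖B_t^{(k)} − B_t^{(k+1)}‖_F². -/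
/-!
The surrogate is a quadratic function of `B`. Its restriction to the line `B⁺ + s (B - B⁺)` through
the minimizer `B⁺` is `Q(B⁺) + L s + C s²`, where `C` is the right-hand side of the claimed bound
(`QtilB_line`). Minimality for every real `s` forces `L = 0` (`linear_coeff_eq_zero`), so
`Q(B) - Q(B⁺) = C` exactly.

On the other hand, replacing `B` by `B⁺` at the single time `t` changes only the terms of `F` in
which the time `t` occurs: one summand of each single-time sum and the summands `t`, `t + 1` of the
smoothing sum. These are the terms of the surrogate, except that the surrogate has the completed
data residual, which dominates the observed residual and equals it at `B` (`frobSq_completed`).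
Hence the decrease of `F` is at least `Q(B) - Q(B⁺)`.
-/

open Matrix BigOperators Finset Filter Topology

/-- The Frobenius inner product. -/
noncomputable def frobInner {a b : ℕ} (M N : Matrix (Fin a) (Fin b) ℝ) : ℝ :=
  ∑ i, ∑ j, M i j * N i j

lemma frobSq_add_smul {a b : ℕ} (M N : Matrix (Fin a) (Fin b) ℝ) (s : ℝ) :
    frobSq (M + s • N) = frobSq M + 2 * s * frobInner M N + s ^ 2 * frobSq N := by
  simp only [frobSq, frobInner, Finset.mul_sum, ← Finset.sum_add_distrib]
  refine Finset.sum_congr rfl fun i _ => Finset.sum_congr rfl fun j _ => ?_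
  simp only [Matrix.add_apply, Matrix.smul_apply, smul_eq_mul]
  ring

lemma frobSq_sub_smul {a b : ℕ} (M N : Matrix (Fin a) (Fin b) ℝ) (s : ℝ) :
    frobSq (M - s • N) = frobSq M - 2 * s * frobInner M N + s ^ 2 * frobSq N := by
  rw [sub_eq_add_neg, ← neg_smul, frobSq_add_smul]
  ring

/-- Filling the unobserved entries of `X` with those of `Z` adds to the observed residual of `W`
exactly the unobserved part of `Z - W`. -/
lemma frobSq_completed {a b : ℕ} (Ω : Finset (Fin a × Fin b))
    (X Z W : Matrix (Fin a) (Fin b) ℝ) :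
    frobSq (proj Ω X + projPerp Ω Z - W) =
      frobSq (proj Ω (X - W)) + frobSq (projPerp Ω (Z - W)) := by
  simp only [frobSq, ← Finset.sum_add_distrib]
  refine Finset.sum_congr rfl fun i _ => Finset.sum_congr rfl fun j _ => ?_
  simp only [Matrix.add_apply, Matrix.sub_apply, projPerp, proj]
  split_ifs <;> ring

lemma frobSq_projPerp_sub_self {a b : ℕ} (Ω : Finset (Fin a × Fin b))
    (Z : Matrix (Fin a) (Fin b) ℝ) : frobSq (projPerp Ω (Z - Z)) = 0 := by
  simp [frobSq, projPerp, proj]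

lemma linear_coeff_eq_zero {L C : ℝ} (h : ∀ s : ℝ, 0 ≤ L * s + C * s ^ 2) : L = 0 := by
  have hd : discrim C L 0 ≤ 0 := discrim_le_zero fun s => by
    have := h s
    linarith [sq s, congrArg (C * ·) (sq s)]
  simp only [discrim, mul_zero, sub_zero] at hd
  exact pow_eq_zero_iff (two_ne_zero) |>.mp (le_antisymm hd (sq_nonneg L))

/-- Along a line the surrogate is a quadratic polynomial whose leading coefficient depends only on
the direction `D`. -/
lemma QtilB_line {m n r : ℕ} (T : ℕ) (l1 l2 l3 : ℝ)
    (Ωt : Finset (Fin m × Fin n)) (Xt Yt : Matrix (Fin m) (Fin n) ℝ)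
    (At : Matrix (Fin m) (Fin r) ℝ) (Bkt : Matrix (Fin n) (Fin r) ℝ)
    (prevM nextM : Matrix (Fin m) (Fin n) ℝ) (t : ℕ) (B D : Matrix (Fin n) (Fin r) ℝ) :
    ∃ L : ℝ, ∀ s : ℝ,
      QtilB T l1 l2 l3 Ωt Xt Yt At Bkt prevM nextM t (B + s • D) =
        QtilB T l1 l2 l3 Ωt Xt Yt At Bkt prevM nextM t B + L * s +
          (((1 + l2 * ((if 1 < t then (1 : ℝ) else 0) + (if t < T then (1 : ℝ) else 0)) + l3) / 2)
            * frobSq (At * Dᵀ) + (l1 / 2) * frobSq D) * s ^ 2 := by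
  refine ⟨-frobInner (proj Ωt Xt + projPerp Ωt (At * Bktᵀ) - At * Bᵀ) (At * Dᵀ)
    + l1 * frobInner B D - l3 * frobInner (Yt - At * Bᵀ) (At * Dᵀ)
    + l2 * (if 1 < t then frobInner (At * Bᵀ - prevM) (At * Dᵀ) else 0)
    - l2 * (if t < T then frobInner (nextM - At * Bᵀ) (At * Dᵀ) else 0), fun s => ?_⟩
  have hmul : At * (B + s • D)ᵀ = At * Bᵀ + s • (At * Dᵀ) := by
    rw [Matrix.transpose_add, Matrix.transpose_smul, Matrix.mul_add, Matrix.mul_smul]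
  simp only [QtilB, hmul, ← sub_sub, add_sub_right_comm (At * Bᵀ), frobSq_add_smul,
    frobSq_sub_smul]
  split_ifs <;> ring

/-- The gap of the surrogate at a global minimizer is its purely quadratic part. -/
lemma QtilB_gap {m n r : ℕ} (T : ℕ) (l1 l2 l3 : ℝ)
    (Ωt : Finset (Fin m × Fin n)) (Xt Yt : Matrix (Fin m) (Fin n) ℝ)
    (At : Matrix (Fin m) (Fin r) ℝ) (Bkt : Matrix (Fin n) (Fin r) ℝ)
    (prevM nextM : Matrix (Fin m) (Fin n) ℝ) (t : ℕ) (Bmin : Matrix (Fin n) (Fin r) ℝ)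
    (hmin : ∀ B, QtilB T l1 l2 l3 Ωt Xt Yt At Bkt prevM nextM t Bmin ≤
      QtilB T l1 l2 l3 Ωt Xt Yt At Bkt prevM nextM t B) (B : Matrix (Fin n) (Fin r) ℝ) :
    QtilB T l1 l2 l3 Ωt Xt Yt At Bkt prevM nextM t B -
        QtilB T l1 l2 l3 Ωt Xt Yt At Bkt prevM nextM t Bmin =
      ((1 + l2 * ((if 1 < t then (1 : ℝ) else 0) + (if t < T then (1 : ℝ) else 0)) + l3) / 2)
        * frobSq (At * (B - Bmin)ᵀ) + (l1 / 2) * frobSq (B - Bmin) := by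
  obtain ⟨L, hL⟩ := QtilB_line T l1 l2 l3 Ωt Xt Yt At Bkt prevM nextM t Bmin (B - Bmin)
  have hL0 : L = 0 := linear_coeff_eq_zero fun s => by
    have := hmin (Bmin + s • (B - Bmin))
    rwa [hL s, add_assoc, le_add_iff_nonneg_right] at this
  have h1 := hL 1
  rw [one_smul, add_sub_cancel, hL0] at h1
  rw [h1]
  ring

lemma sum_sub_sum_eq_single {T t : ℕ} (ht : t ∈ Finset.Icc 1 T) (f g : ℕ → ℝ)
    (h : ∀ s, s ≠ t → f s = g s) :
    ∑ s ∈ Finset.Icc 1 T, f s - ∑ s ∈ Finset.Icc 1 T, g s = f t - g t := by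
  rw [← Finset.sum_sub_distrib]
  exact Finset.sum_eq_single_of_mem t ht fun s _ hs => sub_eq_zero.mpr (h s hs)

lemma sum_sub_sum_eq_pair {T t : ℕ} (ht : t ∈ Finset.Icc 1 T) (f g : ℕ → ℝ)
    (h : ∀ s, 2 ≤ s → s ≠ t → s ≠ t + 1 → f s = g s) :
    ∑ s ∈ Finset.Icc 2 T, f s - ∑ s ∈ Finset.Icc 2 T, g s =
      (if 1 < t then f t - g t else 0) + (if t < T then f (t + 1) - g (t + 1) else 0) := by
  rw [Finset.mem_Icc] at ht
  have hpt : ∀ s ∈ Finset.Icc 2 T, f s - g s =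
      (if s = t then f t - g t else 0) +
        (if s = t + 1 then f (t + 1) - g (t + 1) else 0) := by
    intro s hs
    rw [Finset.mem_Icc] at hs
    by_cases h1 : s = t
    · subst h1; simp
    · by_cases h2 : s = t + 1
      · subst h2; simp
      · simp [h1, h2, h s hs.1 h1 h2]
  rw [← Finset.sum_sub_distrib, Finset.sum_congr rfl hpt, Finset.sum_add_distrib,
    Finset.sum_ite_eq', Finset.sum_ite_eq']
  have e1 : t ∈ Finset.Icc 2 T ↔ 1 < t := by rw [Finset.mem_Icc]; omega
  have e2 : t + 1 ∈ Finset.Icc 2 T ↔ t < T := by rw [Finset.mem_Icc]; omega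
  simp only [e1, e2]

/-- per-update descent bound for the B-step: along the VISTA iterates,
`Δ^B_{k,t} = F(A_{1:T}^{(k+1)}, B_{1:t−1}^{(k+1)}, B_{t:T}^{(k)}) −
F(A_{1:T}^{(k+1)}, B_{1:t}^{(k+1)}, B_{t+1:T}^{(k)})` is bounded below by
`((1+λ2(1{t>1}+1{t<T})+λ3)/2)‖A_t^{(k+1)}(B_t^{(k)}−B_t^{(k+1)})ᵀ‖_F²
  + (λ1/2)‖B_t^{(k)}−B_t^{(k+1)}‖_F²`. -/
theorem stmt8 (m n r T : ℕ) (hm : 0 < m) (hn : 0 < n) (hr : 0 < r) (hT : 0 < T)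
    (l1 l2 l3 : ℝ) (hl1 : 0 ≤ l1) (hl2 : 0 ≤ l2) (hl3 : 0 ≤ l3)
    (Ωs : ℕ → Finset (Fin m × Fin n))
    (Xs Ys : ℕ → Matrix (Fin m) (Fin n) ℝ)
    (AA : ℕ → ℕ → Matrix (Fin m) (Fin r) ℝ)
    (BB : ℕ → ℕ → Matrix (Fin n) (Fin r) ℝ)
    (hB : ∀ k, 1 ≤ k → ∀ t ∈ Finset.Icc 1 T, ∀ B : Matrix (Fin n) (Fin r) ℝ,
      QtilB T l1 l2 l3 (Ωs t) (Xs t) (Ys t) (AA (k + 1) t) (BB k t)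
          (AA (k + 1) (t - 1) * (BB (k + 1) (t - 1))ᵀ)
          (AA (k + 1) (t + 1) * (BB k (t + 1))ᵀ) t (BB (k + 1) t)
        ≤ QtilB T l1 l2 l3 (Ωs t) (Xs t) (Ys t) (AA (k + 1) t) (BB k t)
          (AA (k + 1) (t - 1) * (BB (k + 1) (t - 1))ᵀ)
          (AA (k + 1) (t + 1) * (BB k (t + 1))ᵀ) t B)
    : ∀ k, 1 ≤ k → ∀ t ∈ Finset.Icc 1 T,
      ((1 + l2 * ((if 1 < t then (1 : ℝ) else 0) + (if t < T then (1 : ℝ) else 0)) + l3) / 2)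
            * frobSq (AA (k + 1) t * (BB k t - BB (k + 1) t)ᵀ)
          + (l1 / 2) * frobSq (BB k t - BB (k + 1) t)
        ≤ objF T l1 l2 l3 Ωs Xs Ys (AA (k + 1))
            (fun s => if s < t then BB (k + 1) s else BB k s)
          - objF T l1 l2 l3 Ωs Xs Ys (AA (k + 1))
              (fun s => if s < t + 1 then BB (k + 1) s else BB k s) := by
  intro k hk t ht
  rw [← QtilB_gap T l1 l2 l3 (Ωs t) (Xs t) (Ys t) (AA (k + 1) t) (BB k t)
    (AA (k + 1) (t - 1) * (BB (k + 1) (t - 1))ᵀ) (AA (k + 1) (t + 1) * (BB k (t + 1))ᵀ) t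
    (BB (k + 1) t) (hB k hk t ht) (BB k t)]
  set G : ℕ → Matrix (Fin n) (Fin r) ℝ := fun s => if s < t then BB (k + 1) s else BB k s with hG
  set G' : ℕ → Matrix (Fin n) (Fin r) ℝ :=
    fun s => if s < t + 1 then BB (k + 1) s else BB k s with hG'
  have ht1 : 1 ≤ t := (Finset.mem_Icc.mp ht).1
  have hGG : ∀ s, s ≠ t → G s = G' s := by
    intro s hs
    have : s < t ↔ s < t + 1 := by omega
    simp only [hG, hG', this]
  have hGt : G t = BB k t := by simp [hG]
  have hGt' : G' t = BB (k + 1) t := by simp [hG']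
  have hGp : G (t - 1) = BB (k + 1) (t - 1) := if_pos (by omega)
  have hGp' : G' (t - 1) = BB (k + 1) (t - 1) := if_pos (by omega)
  have hGn : G (t + 1) = BB k (t + 1) := if_neg (by omega)
  have hGn' : G' (t + 1) = BB k (t + 1) := if_neg (by omega)
  have d1 := sum_sub_sum_eq_single ht
    (fun s => frobSq (proj (Ωs s) (Xs s - AA (k + 1) s * (G s)ᵀ)))
    (fun s => frobSq (proj (Ωs s) (Xs s - AA (k + 1) s * (G' s)ᵀ)))
    (fun s hs => by simp only [hGG s hs])
  have d2 := sum_sub_sum_eq_single ht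
    (fun s => frobSq (AA (k + 1) s) + frobSq (G s))
    (fun s => frobSq (AA (k + 1) s) + frobSq (G' s))
    (fun s hs => by simp only [hGG s hs])
  have d3 := sum_sub_sum_eq_pair ht
    (fun s => frobSq (AA (k + 1) s * (G s)ᵀ - AA (k + 1) (s - 1) * (G (s - 1))ᵀ))
    (fun s => frobSq (AA (k + 1) s * (G' s)ᵀ - AA (k + 1) (s - 1) * (G' (s - 1))ᵀ))
    (fun s h2 hs hs' => by simp only [hGG s hs, hGG (s - 1) (by omega)])
  have d4 := sum_sub_sum_eq_single ht
    (fun s => frobSq (Ys s - AA (k + 1) s * (G s)ᵀ))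
    (fun s => frobSq (Ys s - AA (k + 1) s * (G' s)ᵀ))
    (fun s hs => by simp only [hGG s hs])
  simp only [add_tsub_cancel_right, hGt, hGt', hGp, hGp', hGn, hGn'] at d1 d2 d3 d4
  have hnn := frobSq_nonneg
    (projPerp (Ωs t) (AA (k + 1) t * (BB k t)ᵀ - AA (k + 1) t * (BB (k + 1) t)ᵀ))
  simp only [objF, QtilB, frobSq_completed, frobSq_projPerp_sub_self]
  -- The four sum differences are substituted with their coefficients in the objective.
  have e1 := congrArg ((1 / 2 : ℝ) * ·) d1
  have e2 := congrArg ((l1 / 2) * ·) d2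
  have e3 := congrArg ((l2 / 2) * ·) d3
  have e4 := congrArg ((l3 / 2) * ·) d4
  simp only [mul_sub, mul_add] at e1 e2 e3 e4 ⊢
  split_ifs at e3 ⊢ <;> linarith
end

section
/- Theorem 4 (stationarity of limit points): suppose λ1 > 0 and the VISTA iterates converge entrywise, A_t^{(k)} → A_t* and B_t^{(k)} → B_t* as k → ∞, for every t ∈ {1,…,T}. Then the limit is a stationary point in the sense that for every t, A_t* is a global minimizer over ℝ^{m×r} of the limiting surrogate Q̃*_{A,t}(A) = (1/2)‖X_t* − A(B_t*)ᵀ‖_F² + (λ1/2)‖A‖_F² + (λ3/2)‖Y_t − A(B_t*)ᵀ‖_F² + (λ2/2)·1{t>1}·‖A(B_t*)ᵀ − A_{t−1}*(B_{t−1}*)ᵀ‖_F² + (λ2/2)·1{t<T}·‖A_{t+1}*(B_{t+1}*)ᵀ − A(B_t*)ᵀ‖_F², where X_t* = P_{Ω_t}(X_t) + P_{Ω_t^⊥}(A_t*(B_t*)ᵀ); and B_t* is a global minimizer over ℝ^{n×r} of the analogous limiting surrogate Q̃*_{B,t}(B) = (1/2)‖X_t* − A_t*Bᵀ‖_F² +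 (λ1/2)‖B‖_F² + (λ3/2)‖Y_t − A_t*Bᵀ‖_F² + (λ2/2)·1{t>1}·‖A_t*Bᵀ − A_{t−1}*(B_{t−1}*)ᵀ‖_F² + (λ2/2)·1{t<T}·‖A_{t+1}*(B_{t+1}*)ᵀ − A_t*Bᵀ‖_F². -/
/-!
Each surrogate is a continuous function jointly of all its matrix arguments. For a fixed
competitor, the minimality inequality at step `k` therefore passes to the limit `k → ∞`: both the
iterates with index `k` and those with index `k + 1` converge to the starred matrices. The only
care needed is at the ends `t = 1` and `t = T`, where the neighbour outside `{1, …, T}` is not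
assumed to converge but its coupling term is absent. The limit passage is carried by
`tendsto_QtilA` and `tendsto_QtilB`.
-/

open Matrix BigOperators Finset Filter Topology

lemma tendsto_frobSq {a b : ℕ} {M : ℕ → Matrix (Fin a) (Fin b) ℝ}
    {M' : Matrix (Fin a) (Fin b) ℝ} (h : Tendsto M atTop (𝓝 M')) :
    Tendsto (fun k => frobSq (M k)) atTop (𝓝 (frobSq M')) := by
  have hc : Continuous (frobSq : Matrix (Fin a) (Fin b) ℝ → ℝ) := by
    unfold frobSq
    fun_prop
  exact (hc.tendsto M').comp h

lemma tendsto_projPerp {a b : ℕ} (Ω : Finset (Fin a × Fin b))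
    {M : ℕ → Matrix (Fin a) (Fin b) ℝ} {M' : Matrix (Fin a) (Fin b) ℝ}
    (h : Tendsto M atTop (𝓝 M')) :
    Tendsto (fun k => projPerp Ω (M k)) atTop (𝓝 (projPerp Ω M')) := by
  have hc : Continuous (proj Ω) := by
    refine continuous_matrix fun i j => ?_
    unfold proj
    split_ifs <;> fun_prop
  exact h.sub ((hc.tendsto M').comp h)

lemma tendsto_mul_transpose {a b c : ℕ} {M : ℕ → Matrix (Fin a) (Fin c) ℝ}
    {N : ℕ → Matrix (Fin b) (Fin c) ℝ} {M' : Matrix (Fin a) (Fin c) ℝ}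
    {N' : Matrix (Fin b) (Fin c) ℝ} (hM : Tendsto M atTop (𝓝 M')) (hN : Tendsto N atTop (𝓝 N')) :
    Tendsto (fun k => M k * (N k)ᵀ) atTop (𝓝 (M' * N'ᵀ)) := by
  have hc : Continuous fun p : Matrix (Fin a) (Fin c) ℝ × Matrix (Fin b) (Fin c) ℝ =>
      p.1 * p.2ᵀ := by fun_prop
  exact (hc.tendsto (M', N')).comp (hM.prodMk_nhds hN)

/-- Along convergent arguments the `A`-surrogate converges. The neighbouring imputations only
need to converge when the corresponding coupling term is present. -/
lemma tendsto_QtilA {m n r : ℕ} (T : ℕ) (l1 l2 l3 : ℝ)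
    (Ωt : Finset (Fin m × Fin n)) (Xt Yt : Matrix (Fin m) (Fin n) ℝ) (t : ℕ)
    {Ak A : ℕ → Matrix (Fin m) (Fin r) ℝ} {Bk : ℕ → Matrix (Fin n) (Fin r) ℝ}
    {P N : ℕ → Matrix (Fin m) (Fin n) ℝ}
    {Ak' A' : Matrix (Fin m) (Fin r) ℝ} {Bk' : Matrix (Fin n) (Fin r) ℝ}
    {P' N' : Matrix (Fin m) (Fin n) ℝ}
    (hAk : Tendsto Ak atTop (𝓝 Ak')) (hBk : Tendsto Bk atTop (𝓝 Bk'))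
    (hP : 1 < t → Tendsto P atTop (𝓝 P')) (hN : t < T → Tendsto N atTop (𝓝 N'))
    (hA : Tendsto A atTop (𝓝 A')) :
    Tendsto (fun k => QtilA T l1 l2 l3 Ωt Xt Yt (Ak k) (Bk k) (P k) (N k) t (A k)) atTop
      (𝓝 (QtilA T l1 l2 l3 Ωt Xt Yt Ak' Bk' P' N' t A')) := by
  unfold QtilA
  have hAB := tendsto_mul_transpose hA hBk
  have hfill := tendsto_projPerp Ωt (tendsto_mul_transpose hAk hBk)
  refine ((((tendsto_frobSq ((hfill.const_add _).sub hAB)).const_mul _).add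
    ((tendsto_frobSq hA).const_mul _)).add
    ((tendsto_frobSq (hAB.const_sub _)).const_mul _) |>.add
    (Tendsto.const_mul _ ?_)).add (Tendsto.const_mul _ ?_)
  · split_ifs with h
    · exact tendsto_frobSq (hAB.sub (hP h))
    · exact tendsto_const_nhds
  · split_ifs with h
    · exact tendsto_frobSq ((hN h).sub hAB)
    · exact tendsto_const_nhds

/-- The `B`-surrogate analogue of `tendsto_QtilA`. -/
lemma tendsto_QtilB {m n r : ℕ} (T : ℕ) (l1 l2 l3 : ℝ)
    (Ωt : Finset (Fin m × Fin n)) (Xt Yt : Matrix (Fin m) (Fin n) ℝ) (t : ℕ)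
    {A : ℕ → Matrix (Fin m) (Fin r) ℝ} {Bk B : ℕ → Matrix (Fin n) (Fin r) ℝ}
    {P N : ℕ → Matrix (Fin m) (Fin n) ℝ}
    {A' : Matrix (Fin m) (Fin r) ℝ} {Bk' B' : Matrix (Fin n) (Fin r) ℝ}
    {P' N' : Matrix (Fin m) (Fin n) ℝ}
    (hA : Tendsto A atTop (𝓝 A')) (hBk : Tendsto Bk atTop (𝓝 Bk'))
    (hP : 1 < t → Tendsto P atTop (𝓝 P')) (hN : t < T → Tendsto N atTop (𝓝 N'))
    (hB : Tendsto B atTop (𝓝 B')) :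
    Tendsto (fun k => QtilB T l1 l2 l3 Ωt Xt Yt (A k) (Bk k) (P k) (N k) t (B k)) atTop
      (𝓝 (QtilB T l1 l2 l3 Ωt Xt Yt A' Bk' P' N' t B')) := by
  unfold QtilB
  have hAB := tendsto_mul_transpose hA hB
  have hfill := tendsto_projPerp Ωt (tendsto_mul_transpose hA hBk)
  refine ((((tendsto_frobSq ((hfill.const_add _).sub hAB)).const_mul _).add
    ((tendsto_frobSq hB).const_mul _)).add
    ((tendsto_frobSq (hAB.const_sub _)).const_mul _) |>.add
    (Tendsto.const_mul _ ?_)).add (Tendsto.const_mul _ ?_)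
  · split_ifs with h
    · exact tendsto_frobSq (hAB.sub (hP h))
    · exact tendsto_const_nhds
  · split_ifs with h
    · exact tendsto_frobSq ((hN h).sub hAB)
    · exact tendsto_const_nhds

/-- Theorem 4, stationarity of limit points: if `λ1 > 0` and the VISTA
iterates converge entrywise, `A_t^{(k)} → A_t*` and `B_t^{(k)} → B_t*`, then for each `t`,
`A_t*` minimizes the limiting surrogate `Q̃*_{A,t}` and `B_t*` minimizes `Q̃*_{B,t}`. -/
theorem stmt15 (m n r T : ℕ) (hm : 0 < m) (hn : 0 < n) (hr : 0 < r) (hT : 0 < T)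
    (l1 l2 l3 : ℝ) (hl1 : 0 < l1) (hl2 : 0 ≤ l2) (hl3 : 0 ≤ l3)
    (Ωs : ℕ → Finset (Fin m × Fin n))
    (Xs Ys : ℕ → Matrix (Fin m) (Fin n) ℝ)
    (AA : ℕ → ℕ → Matrix (Fin m) (Fin r) ℝ)
    (BB : ℕ → ℕ → Matrix (Fin n) (Fin r) ℝ)
    (hA : ∀ k, 1 ≤ k → ∀ t ∈ Finset.Icc 1 T, ∀ A : Matrix (Fin m) (Fin r) ℝ,
      QtilA T l1 l2 l3 (Ωs t) (Xs t) (Ys t) (AA k t) (BB k t)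
          (AA (k + 1) (t - 1) * (BB k (t - 1))ᵀ) (AA k (t + 1) * (BB k (t + 1))ᵀ) t
          (AA (k + 1) t)
        ≤ QtilA T l1 l2 l3 (Ωs t) (Xs t) (Ys t) (AA k t) (BB k t)
          (AA (k + 1) (t - 1) * (BB k (t - 1))ᵀ) (AA k (t + 1) * (BB k (t + 1))ᵀ) t A)
    (hB : ∀ k, 1 ≤ k → ∀ t ∈ Finset.Icc 1 T, ∀ B : Matrix (Fin n) (Fin r) ℝ,
      QtilB T l1 l2 l3 (Ωs t) (Xs t) (Ys t) (AA (k + 1) t) (BB k t)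
          (AA (k + 1) (t - 1) * (BB (k + 1) (t - 1))ᵀ)
          (AA (k + 1) (t + 1) * (BB k (t + 1))ᵀ) t (BB (k + 1) t)
        ≤ QtilB T l1 l2 l3 (Ωs t) (Xs t) (Ys t) (AA (k + 1) t) (BB k t)
          (AA (k + 1) (t - 1) * (BB (k + 1) (t - 1))ᵀ)
          (AA (k + 1) (t + 1) * (BB k (t + 1))ᵀ) t B)
    (Astar : ℕ → Matrix (Fin m) (Fin r) ℝ)
    (Bstar : ℕ → Matrix (Fin n) (Fin r) ℝ)
    (hconvA : ∀ t ∈ Finset.Icc 1 T,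
      Filter.Tendsto (fun k => AA k t) Filter.atTop (nhds (Astar t)))
    (hconvB : ∀ t ∈ Finset.Icc 1 T,
      Filter.Tendsto (fun k => BB k t) Filter.atTop (nhds (Bstar t))) :
    ∀ t ∈ Finset.Icc 1 T,
      (∀ A : Matrix (Fin m) (Fin r) ℝ,
        QtilA T l1 l2 l3 (Ωs t) (Xs t) (Ys t) (Astar t) (Bstar t)
            (Astar (t - 1) * (Bstar (t - 1))ᵀ) (Astar (t + 1) * (Bstar (t + 1))ᵀ) t
            (Astar t)
          ≤ QtilA T l1 l2 l3 (Ωs t) (Xs t) (Ys t) (Astar t) (Bstar t)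
            (Astar (t - 1) * (Bstar (t - 1))ᵀ) (Astar (t + 1) * (Bstar (t + 1))ᵀ) t A) ∧
      (∀ B : Matrix (Fin n) (Fin r) ℝ,
        QtilB T l1 l2 l3 (Ωs t) (Xs t) (Ys t) (Astar t) (Bstar t)
            (Astar (t - 1) * (Bstar (t - 1))ᵀ) (Astar (t + 1) * (Bstar (t + 1))ᵀ) t
            (Bstar t)
          ≤ QtilB T l1 l2 l3 (Ωs t) (Xs t) (Ys t) (Astar t) (Bstar t)
            (Astar (t - 1) * (Bstar (t - 1))ᵀ) (Astar (t + 1) * (Bstar (t + 1))ᵀ) t B) := by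
  intro t ht
  obtain ⟨h1, h2⟩ := Finset.mem_Icc.mp ht
  have hprev : 1 < t → t - 1 ∈ Finset.Icc 1 T := fun h => Finset.mem_Icc.mpr (by omega)
  have hnext : t < T → t + 1 ∈ Finset.Icc 1 T := fun h => Finset.mem_Icc.mpr (by omega)
  have hconvA' : ∀ s ∈ Finset.Icc 1 T, Tendsto (fun k => AA (k + 1) s) atTop (𝓝 (Astar s)) :=
    fun s hs => (hconvA s hs).comp (tendsto_add_atTop_nat 1)
  have hconvB' : ∀ s ∈ Finset.Icc 1 T, Tendsto (fun k => BB (k + 1) s) atTop (𝓝 (Bstar s)) :=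
    fun s hs => (hconvB s hs).comp (tendsto_add_atTop_nat 1)
  constructor
  · intro A
    have hP := fun h => tendsto_mul_transpose (hconvA' _ (hprev h)) (hconvB _ (hprev h))
    have hN := fun h => tendsto_mul_transpose (hconvA _ (hnext h)) (hconvB _ (hnext h))
    refine le_of_tendsto_of_tendsto
      (tendsto_QtilA T l1 l2 l3 (Ωs t) (Xs t) (Ys t) t (hconvA t ht) (hconvB t ht) hP hN
        (hconvA' t ht))
      (tendsto_QtilA T l1 l2 l3 (Ωs t) (Xs t) (Ys t) t (hconvA t ht) (hconvB t ht) hP hN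
        tendsto_const_nhds) ?_
    filter_upwards [eventually_ge_atTop 1] with k hk using hA k hk t ht A
  · intro B
    have hP := fun h => tendsto_mul_transpose (hconvA' _ (hprev h)) (hconvB' _ (hprev h))
    have hN := fun h => tendsto_mul_transpose (hconvA' _ (hnext h)) (hconvB _ (hnext h))
    refine le_of_tendsto_of_tendsto
      (tendsto_QtilB T l1 l2 l3 (Ωs t) (Xs t) (Ys t) t (hconvA' t ht) (hconvB t ht) hP hN
        (hconvB' t ht))
      (tendsto_QtilB T l1 l2 l3 (Ωs t) (Xs t) (Ys t) t (hconvA' t ht) (hconvB t ht) hP hN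
        tendsto_const_nhds) ?_
    filter_upwards [eventually_ge_atTop 1] with k hk using hB k hk t ht B
end
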